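/- arXiv:1208.2087 — 2 statements merged into one kernel-verified Lean document; each statement's English description precedes it below -/
import Mathlib

section
/- For every real number s > 0, with t = t(s), the matrix L = X⁻⁴·W*·W is diagonal, where W = X·Y·X⁻¹·Y⁻¹·X·Y and W* = Y·X·Y⁻¹·X⁻¹·Y·X. (L is the image of a preferred longitude λ = x⁻⁴w*w of the knot 5₂ under the representation ρ_s.) -/
/-!
Write `w = x y x⁻¹ y⁻¹ x y` and `w* = y x y⁻¹ x⁻¹ y x`. The knot group of `5₂` has the single
relation `w x = y w`, and the matrices `X`, `Y` satisfy it: both have determinant one and trace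
`u + u⁻¹` with `u = √t`, while `tr (XY) = T - s`, and for such a pair the Cayley-Hamilton identities
give `W X - Y W = -φ(s, T) (X - Y)`, where
`φ(s, T) = s T² - (2 + 3 s + 2 s²) T + s³ + 3 s² + 4 s + 3` is the Riley polynomial
(`word_mul_eq`). The given `T` is the larger root of `φ(s, ·)`.

The hypotheses of that computation are symmetric in the two matrices, and swapping them turns `W`
into `W*`, so also `W* Y = X W*`. Hence `W* W X = W* Y W = X W* W`, so `X⁻⁴ W* W` commutes with `X`.
As `t > 1`, the matrix `X` is diagonal with distinct eigenvalues, and anything commuting with it is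
diagonal.
-/

open Real Filter Topology

noncomputable def T (s : ℝ) : ℝ := (2 + 3*s + 2*s^2 + Real.sqrt (s^2 + 4)) / (2*s)

noncomputable def t (s : ℝ) : ℝ := (T s + Real.sqrt ((T s)^2 - 4)) / 2

noncomputable def X (s : ℝ) : Matrix (Fin 2) (Fin 2) ℝ :=
  !![Real.sqrt (t s), 0; 0, 1 / Real.sqrt (t s)]

noncomputable def Y (s : ℝ) : Matrix (Fin 2) (Fin 2) ℝ :=
  !![(t s - s - 1) / (Real.sqrt (t s) - 1 / Real.sqrt (t s)),
     s / (Real.sqrt (t s) - 1 / Real.sqrt (t s))^2 - 1;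
     -s,
     (s + 1 - 1 / t s) / (Real.sqrt (t s) - 1 / Real.sqrt (t s))]

/-- The element `p + q A + r B + w A B` of the algebra generated by `A` and `B`. For `2 × 2` matrices
of determinant one these combinations are closed under left multiplication by `A`, `B` and their
inverses. -/
def comb (A B : Matrix (Fin 2) (Fin 2) ℝ) (p q r w : ℝ) : Matrix (Fin 2) (Fin 2) ℝ :=
  p • (1 : Matrix (Fin 2) (Fin 2) ℝ) + q • A + r • B + w • (A * B)

/-- Left multiplication by `A`, from `A² = τ A - 1`. -/
lemma left_mul_comb (A B : Matrix (Fin 2) (Fin 2) ℝ) (hA : A.det = 1) {τ : ℝ} (htA : A.trace = τ)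
    (p q r w : ℝ) : A * comb A B p q r w = comb A B (-q) (p + τ * q) (-w) (r + τ * w) := by
  obtain ⟨a, b, c, e, rfl⟩ : ∃ a b c e, A = !![a, b; c, e] := ⟨_, _, _, _, Matrix.eta_fin_two A⟩
  obtain ⟨f, g, h, k, rfl⟩ : ∃ a b c e, B = !![a, b; c, e] := ⟨_, _, _, _, Matrix.eta_fin_two B⟩
  simp only [Matrix.trace_fin_two_of, Matrix.det_fin_two_of] at hA htA
  subst htA
  ext i j
  fin_cases i <;> fin_cases j <;> simp [comb, Matrix.one_fin_two]
  · linear_combination (-q - w * f) * hA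
  · linear_combination (-w * g) * hA
  · linear_combination (-w * h) * hA
  · linear_combination (-q - w * k) * hA

/-- Left multiplication by `B`, from `B² = τ B - 1`, `B A = -A B + τ A + τ B + z - τ²` and
`B A B = A + z B - τ`. -/
lemma right_mul_comb (A B : Matrix (Fin 2) (Fin 2) ℝ) (hB : B.det = 1) {τ z : ℝ}
    (htA : A.trace = τ) (htB : B.trace = τ) (hz : (A * B).trace = z) (p q r w : ℝ) :
    B * comb A B p q r w =
      comb A B ((z - τ ^ 2) * q - r - τ * w) (τ * q + w) (p + τ * q + τ * r + z * w) (-q) := by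
  obtain ⟨a, b, c, e, rfl⟩ : ∃ a b c e, A = !![a, b; c, e] := ⟨_, _, _, _, Matrix.eta_fin_two A⟩
  obtain ⟨f, g, h, k, rfl⟩ : ∃ a b c e, B = !![a, b; c, e] := ⟨_, _, _, _, Matrix.eta_fin_two B⟩
  simp only [Matrix.trace_fin_two_of, Matrix.det_fin_two_of, Matrix.mul_fin_two] at hB htA htB hz
  subst htA hz
  obtain rfl : k = a + e - f := by linarith
  ext i j
  fin_cases i <;> fin_cases j <;> simp [comb, Matrix.one_fin_two]
  · linear_combination (-r - w * e) * hB
  · linear_combination (w * b) * hB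
  · linear_combination (w * c) * hB
  · linear_combination (-r - w * a) * hB

/-- Cayley-Hamilton for a matrix of determinant one: `A⁻¹ = τ - A`. -/
lemma inv_eq_trace_sub (A : Matrix (Fin 2) (Fin 2) ℝ) (hA : A.det = 1) {τ : ℝ}
    (htA : A.trace = τ) : A⁻¹ = τ • (1 : Matrix (Fin 2) (Fin 2) ℝ) - A := by
  rw [Matrix.inv_def, hA, Matrix.adjugate_fin_two]
  subst htA
  ext i j
  fin_cases i <;> fin_cases j <;> simp [Matrix.trace_fin_two]

lemma left_inv_mul_comb (A B : Matrix (Fin 2) (Fin 2) ℝ) (hA : A.det = 1) {τ : ℝ}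
    (htA : A.trace = τ) (p q r w : ℝ) :
    A⁻¹ * comb A B p q r w = comb A B (τ * p + q) (-p) (τ * r + w) (-r) := by
  rw [inv_eq_trace_sub A hA htA, sub_mul, left_mul_comb A B hA htA, smul_one_mul]
  simp only [comb]
  module

lemma right_inv_mul_comb (A B : Matrix (Fin 2) (Fin 2) ℝ) (hB : B.det = 1) {τ z : ℝ}
    (htA : A.trace = τ) (htB : B.trace = τ) (hz : (A * B).trace = z) (p q r w : ℝ) :
    B⁻¹ * comb A B p q r w =
      comb A B (τ * p - ((z - τ ^ 2) * q - r - τ * w)) (-w)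
        (-p - τ * q - z * w) (τ * w + q) := by
  rw [inv_eq_trace_sub B hB htB, sub_mul, right_mul_comb A B hB htA htB hz, smul_one_mul]
  simp only [comb]
  module

/-- The relation `w a = b w` of the knot group, for unimodular matrices of equal trace `τ` at which
the Riley polynomial vanishes; here `T = τ² - 2` and `s = T - tr (AB)`. -/
lemma word_mul_eq (A B : Matrix (Fin 2) (Fin 2) ℝ) (hA : A.det = 1) (hB : B.det = 1) {τ T s : ℝ}
    (htA : A.trace = τ) (htB : B.trace = τ) (hT : T = τ ^ 2 - 2) (hz : (A * B).trace = T - s)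
    (hφ : s * T ^ 2 - T * (2 + 3 * s + 2 * s ^ 2) + 3 + 4 * s + 3 * s ^ 2 + s ^ 3 = 0) :
    (A * B * A⁻¹ * B⁻¹ * A * B) * A = B * (A * B * A⁻¹ * B⁻¹ * A * B) := by
  have h1 : A = comb A B 0 1 0 0 := by simp [comb]
  have h2 : A * B = comb A B 0 0 0 1 := by simp [comb]
  have key : A * (B * (A⁻¹ * (B⁻¹ * (A * (B * comb A B 0 1 0 0))))) =
      B * (A * (B * (A⁻¹ * (B⁻¹ * comb A B 0 0 0 1)))) := by
    simp only [left_mul_comb A B hA htA, right_mul_comb A B hB htA htB hz,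
      left_inv_mul_comb A B hA htA, right_inv_mul_comb A B hB htA htB hz]
    subst hT
    congr 1
    · ring
    · linear_combination -hφ
    · linear_combination hφ
    · ring
  rw [← h1, ← h2] at key
  simpa only [mul_assoc] using key

/-- `T` is a root of the Riley polynomial. -/
lemma riley_T {s : ℝ} (hs : 0 < s) :
    s * T s ^ 2 - T s * (2 + 3 * s + 2 * s ^ 2) + 3 + 4 * s + 3 * s ^ 2 + s ^ 3 = 0 := by
  have hr : √(s ^ 2 + 4) ^ 2 = s ^ 2 + 4 := Real.sq_sqrt (by positivity)
  unfold T
  field_simp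
  linear_combination hr

lemma two_lt_T {s : ℝ} (hs : 0 < s) : 2 < T s := by
  have hr : 2 ≤ √(s ^ 2 + 4) := Real.le_sqrt_of_sq_le (by nlinarith)
  unfold T
  rw [lt_div_iff₀ (by positivity)]
  nlinarith [sq_nonneg (s - 1)]

lemma one_lt_t {s : ℝ} (hs : 0 < s) : 1 < t s := by
  have := two_lt_T hs
  have := Real.sqrt_nonneg ((T s) ^ 2 - 4)
  unfold t
  linarith

lemma t_sq {s : ℝ} (hs : 0 < s) : t s ^ 2 + 1 = T s * t s := by
  have h2 := two_lt_T hs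
  have hr : √(T s ^ 2 - 4) ^ 2 = T s ^ 2 - 4 := Real.sq_sqrt (by nlinarith)
  unfold t
  linear_combination hr / 4

/-- A matrix commuting with a diagonal matrix with distinct entries is diagonal. -/
lemma isDiag_of_commute {u v : ℝ} (huv : u ≠ v) (M : Matrix (Fin 2) (Fin 2) ℝ)
    (h : Commute M !![u, 0; 0, v]) : M.IsDiag := by
  obtain ⟨a, b, c, e, rfl⟩ : ∃ a b c e, M = !![a, b; c, e] := ⟨_, _, _, _, Matrix.eta_fin_two M⟩
  have h' := h.eq
  simp only [Matrix.mul_fin_two] at h'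
  have hb := congrFun (congrFun h' 0) 1
  have hc := congrFun (congrFun h' 1) 0
  simp at hb hc
  have hd : u - v ≠ 0 := sub_ne_zero.mpr huv
  have hb0 : b = 0 := by
    have : (u - v) * b = 0 := by linarith
    simpa [hd] using this
  have hc0 : c = 0 := by
    have : (u - v) * c = 0 := by linarith
    simpa [hd] using this
  intro i j hij
  fin_cases i <;> fin_cases j <;> simp_all

theorem stmt_11 : ∀ s : ℝ, 0 < s →
    (((X s)⁻¹)^4 * (Y s * X s * (Y s)⁻¹ * (X s)⁻¹ * Y s * X s)
      * (X s * Y s * (X s)⁻¹ * (Y s)⁻¹ * X s * Y s)).IsDiag := by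
  intro s hs
  have ht := one_lt_t hs
  have hT := t_sq hs
  have hu2 : √(t s) ^ 2 = t s := Real.sq_sqrt (by linarith)
  have hu1 : 1 < √(t s) := Real.lt_sqrt_of_sq_lt (by linarith)
  have hφ := riley_T hs
  have hX : X s = !![√(t s), 0; 0, 1 / √(t s)] := rfl
  rw [← hu2] at hT
  set u := √(t s) with hu
  have hu0 : u ≠ 0 := by positivity
  have hd : u ^ 2 - 1 ≠ 0 := by nlinarith
  have hd' : u - 1 / u = (u ^ 2 - 1) / u := by field_simp
  have hTu : T s = u ^ 2 + 1 / u ^ 2 := by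
    field_simp
    linarith
  have hY : Y s = !![(u ^ 2 - s - 1) / ((u ^ 2 - 1) / u), s / ((u ^ 2 - 1) / u) ^ 2 - 1;
      -s, (s + 1 - 1 / u ^ 2) / ((u ^ 2 - 1) / u)] := by
    rw [← hd', hu2]
    rfl
  have hdX : (X s).det = 1 := by
    rw [hX, Matrix.det_fin_two_of]
    field_simp
    simp
  have htX : (X s).trace = u + 1 / u := by rw [hX, Matrix.trace_fin_two_of]
  have hdY : (Y s).det = 1 := by
    rw [hY, Matrix.det_fin_two_of]
    field_simp
    ring
  have htY : (Y s).trace = u + 1 / u := by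
    rw [hY, Matrix.trace_fin_two_of]
    field_simp
    ring
  have hz : (X s * Y s).trace = T s - s := by
    rw [hX, hY, Matrix.mul_fin_two, Matrix.trace_fin_two_of, hTu]
    field_simp
    ring
  have hTτ : T s = (u + 1 / u) ^ 2 - 2 := by
    rw [hTu]
    field_simp
    ring
  have h1 := word_mul_eq (X s) (Y s) hdX hdY htX htY hTτ hz hφ
  have h2 := word_mul_eq (Y s) (X s) hdY hdX htY htX hTτ (by rw [Matrix.trace_mul_comm, hz]) hφ
  have huv : u ≠ 1 / u := by
    intro h
    rw [← sub_eq_zero, hd', div_eq_zero_iff] at h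
    tauto
  have hXinv : Commute ((X s)⁻¹) (X s) := by
    have hdet : IsUnit (X s).det := by simp [hdX]
    rw [Commute, SemiconjBy, Matrix.nonsing_inv_mul _ hdet, Matrix.mul_nonsing_inv _ hdet]
  generalize X s * Y s * (X s)⁻¹ * (Y s)⁻¹ * X s * Y s = W at h1 ⊢
  generalize Y s * X s * (Y s)⁻¹ * (X s)⁻¹ * Y s * X s = V at h2 ⊢
  have hVW : Commute (V * W) (X s) := by
    rw [Commute, SemiconjBy, mul_assoc, h1, ← mul_assoc, h2, mul_assoc]
  rw [mul_assoc]
  apply isDiag_of_commute huv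
  rw [← hX]
  exact (hXinv.pow_left 4).mul_left hVW
end

section
/- As s tends to +∞, the quantity N(s)·t(s)⁻⁵ tends to 1, where N(s) = s·(1 − (2+s)t + t²)·(s − (2+2s+s²)t + (1+s)t²)² + (1+s−t)²·t³·(s − (1+s)²t + s·t²)² with t = t(s). -/
/-!
Since `t` is the larger root of `t ^ 2 - T t + 1 = 0`, we have `t + t⁻¹ = T`. Put
`d s = (√(s ^ 2 + 4) - s) / 2`, so that `T = s + 2 + (1 + d) / s` and `0 ≤ d ≤ 1 / s`, and put
`e = t - s - 2 = (1 + d) / s - t⁻¹`. As `s → ∞`, the quantities `d`, `t⁻¹` and `e` tend to `0`,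
and `x = s t⁻¹` tends to `1`. The quadratic relation gives
* `1 - (2 + s) t + t ^ 2 = t (1 + d) / s`,
* `s - (1 + s) ^ 2 t + s t ^ 2 = t d`,
* `s - (2 + 2 s + s ^ 2) t + (1 + s) t ^ 2 = s + t (s + (1 + s) e)`,

whence `N t⁻⁵ = (1 + d) (x t⁻¹ + x + (x + t⁻¹) e) ^ 2 + (1 + e) ^ 2 d ^ 2`, which tends to `1`.
-/

open Real Filter Topology

noncomputable def N (s : ℝ) : ℝ :=
  s * (1 - (2 + s) * t s + (t s)^2) * (s - (2 + 2*s + s^2) * t s + (1 + s) * (t s)^2)^2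
    + (1 + s - t s)^2 * (t s)^3 * (s - (1 + s)^2 * t s + s * (t s)^2)^2

/-- The deviation in `T s = s + 2 + (1 + d s) / s`. -/
noncomputable def d (s : ℝ) : ℝ := (Real.sqrt (s^2 + 4) - s) / 2

lemma d_nonneg {s : ℝ} : 0 ≤ d s := by
  have : s ≤ Real.sqrt (s^2 + 4) := Real.le_sqrt_of_sq_le (by linarith)
  unfold d; linarith

lemma d_le {s : ℝ} (hs : 0 < s) : d s ≤ s⁻¹ := by
  have h : Real.sqrt (s^2 + 4) ≤ s + 2 * s⁻¹ := by
    apply Real.sqrt_le_iff.2 ⟨by positivity, ?_⟩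
    have h1 : s * s⁻¹ = 1 := mul_inv_cancel₀ hs.ne'
    nlinarith [sq_nonneg s⁻¹]
  unfold d; linarith

lemma T_eq {s : ℝ} (hs : 0 < s) : T s = s + 2 + (1 + d s) * s⁻¹ := by
  unfold T d; field_simp; ring

lemma add_two_le_T {s : ℝ} (hs : 0 < s) : s + 2 ≤ T s := by
  have : 0 ≤ (1 + d s) * s⁻¹ := by have := @d_nonneg s; positivity
  rw [T_eq hs]; linarith

lemma t_quadratic {s : ℝ} (hs : 0 < s) : t s ^ 2 = T s * t s - 1 := by
  have h := Real.sq_sqrt (show 0 ≤ T s ^ 2 - 4 by nlinarith [add_two_le_T hs])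
  unfold t; nlinarith

lemma half_le_t {s : ℝ} (hs : 0 < s) : s / 2 ≤ t s := by
  have h := Real.sqrt_nonneg (T s ^ 2 - 4)
  have := add_two_le_T hs
  unfold t; linarith

lemma t_eq {s : ℝ} (hs : 0 < s) : t s = s + 2 + ((1 + d s) * s⁻¹ - (t s)⁻¹) := by
  have ht : 0 < t s := by linarith [half_le_t hs]
  have h : t s = T s - (t s)⁻¹ := by
    field_simp
    linarith [t_quadratic hs]
  rw [T_eq hs] at h
  linarith

lemma N_mul_eq {s : ℝ} (hs : 0 < s) : N s * (t s)⁻¹^5 =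
    (1 + d s) * (s * (t s)⁻¹ * (t s)⁻¹ + s * (t s)⁻¹ +
      (s * (t s)⁻¹ + (t s)⁻¹) * ((1 + d s) * s⁻¹ - (t s)⁻¹)) ^ 2
      + (1 + ((1 + d s) * s⁻¹ - (t s)⁻¹)) ^ 2 * d s ^ 2 := by
  have ht : 0 < t s := by linarith [half_le_t hs]
  have hq := t_quadratic hs
  rw [T_eq hs] at hq
  have he : (1 + d s) * s⁻¹ - (t s)⁻¹ = t s - s - 2 := by linarith [t_eq hs]
  have h1 : s * (1 - (2 + s) * t s + t s ^ 2) = t s * (1 + d s) := by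
    rw [hq]; field_simp; ring
  have h2 : s - (1 + s) ^ 2 * t s + s * t s ^ 2 = t s * d s := by
    rw [hq]; field_simp; ring
  rw [he]
  unfold N
  rw [h1, h2]
  field_simp
  ring

theorem stmt_16 : Filter.Tendsto (fun s : ℝ => N s * (t s)⁻¹^5) Filter.atTop (nhds 1) := by
  have hs : Tendsto (fun s : ℝ => s⁻¹) atTop (𝓝 0) := tendsto_inv_atTop_zero
  have hpos : ∀ᶠ s : ℝ in atTop, 0 < s := eventually_gt_atTop 0
  have hd : Tendsto d atTop (𝓝 0) :=
    tendsto_of_tendsto_of_tendsto_of_le_of_le' tendsto_const_nhds hs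
      (Eventually.of_forall fun _ => d_nonneg) (hpos.mono fun _ h => d_le h)
  have ht : Tendsto t atTop atTop :=
    tendsto_atTop_mono' _ (hpos.mono fun _ h => half_le_t h)
      (tendsto_id.atTop_div_const (by norm_num))
  have hw : Tendsto (fun s => (t s)⁻¹) atTop (𝓝 0) := tendsto_inv_atTop_zero.comp ht
  have he : Tendsto (fun s => (1 + d s) * s⁻¹ - (t s)⁻¹) atTop (𝓝 0) := by
    simpa using ((hd.const_add 1).mul hs).sub hw
  have hx : Tendsto (fun s => s * (t s)⁻¹) atTop (𝓝 1) := by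
    have h : Tendsto (fun s => 1 - (2 + ((1 + d s) * s⁻¹ - (t s)⁻¹)) * (t s)⁻¹) atTop (𝓝 1) := by
      simpa using ((he.const_add 2).mul hw).const_sub 1
    refine h.congr' (hpos.mono fun s h => ?_)
    have htp : 0 < t s := by linarith [half_le_t h]
    have h1 : (1 + d s) * s⁻¹ - (t s)⁻¹ = t s - s - 2 := by linarith [t_eq h]
    simp only [h1]
    field_simp
    ring
  have key := ((hd.const_add 1).mul ((((hx.mul hw).add hx).add ((hx.add hw).mul he)).pow 2)).add
    (((he.const_add 1).pow 2).mul (hd.pow 2))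
  norm_num at key
  exact key.congr' (hpos.mono fun _ h => (N_mul_eq h).symm)
end
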